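/- arXiv:0811.3889 — 4 statements merged into one kernel-verified Lean document; each statement's English description precedes it below -/
import Mathlib

section
/- Let U : ℝ^d → [-∞,∞) be a multivariate utility function which is either upper semi-continuous or essentially smooth. If U is asymptotically satiable, then for every ε > 0 there exists x in the interior of dom(U) such that the superdifferential ∂U(x) contains a point of [0,ε)^d (in the essentially smooth case, ∇U(x) ∈ [0,ε)^d). -/
/-!
The argument is the monotonicity of the superdifferential. Let `g ∈ ∂(cl U)(x)` have coordinates
in `[0, ε / (d + 1))`, and put `e = (1, …, 1)`. The point `x` lies in the closed convex cone
`C = cl (dom U)` and `e` lies in the interior of `C`, so `x + e ∈ int C`; since `dom U` is convex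
with nonempty interior, `int C = int (dom U)`. Hence `U` has a supergradient `g'` at `x + e`
(`exists_mem_superdiff`, by Hahn-Banach separation of `(x + e, U (x + e))` from the interior of the
hypograph). As `U` is nondecreasing along the orthant, `g'` is nonnegative. The affine majorant of
`U` given by `g'` also majorizes `cl U`, and comparing it at `x` with the majorant given by `g` at
`x + e` yields `∑ g' i = ⟪e, g'⟫ ≤ ⟪e, g⟫ = ∑ g i < ε`. With nonnegativity, every `g' i < ε`.
-/

open Set Filter Topology
open scoped RealInnerProductSpace

noncomputable section

/-- Euclidean space `ℝ^d`. -/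
abbrev Euc (d : ℕ) := EuclideanSpace ℝ (Fin d)

variable {d : ℕ}

/-- The hypograph of an `EReal`-valued function on `ℝ^d`. -/
def hypograph (U : Euc d → EReal) : Set (Euc d × ℝ) :=
  {p | (p.2 : EReal) ≤ U p.1}

/-- `U : ℝ^d → [-∞,∞)` is proper concave if its hypograph is convex, it never takes the
value `+∞`, and its effective domain is nonempty. -/
def ProperConcave (U : Euc d → EReal) : Prop :=
  Convex ℝ (hypograph U) ∧ (∀ x, U x ≠ ⊤) ∧ (∃ x, U x ≠ ⊥)

/-- The effective domain `dom(U) = {x : U(x) > -∞}`. -/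
def effDom (U : Euc d → EReal) : Set (Euc d) := {x | U x ≠ ⊥}

/-- A convex cone: `λC + μC ⊆ C` for all `λ, μ ≥ 0`. -/
def IsConvexCone (C : Set (Euc d)) : Prop :=
  ∀ a b : ℝ, 0 ≤ a → 0 ≤ b → ∀ x ∈ C, ∀ y ∈ C, a • x + b • y ∈ C

/-- The nonnegative orthant `ℝ^d_+`. -/
def posOrthant (d : ℕ) : Set (Euc d) := {x | ∀ i, 0 ≤ x i}

/-- A multivariate utility function: a proper concave `U` whose support cone
`C_U := cl(dom U)` is a convex cone with `ℝ^d_+ ⊆ C_U ≠ ℝ^d`, and which is nondecreasing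
with respect to the preorder induced by `C_U`. -/
def IsUtility (U : Euc d → EReal) : Prop :=
  ProperConcave U ∧ IsConvexCone (closure (effDom U)) ∧
    posOrthant d ⊆ closure (effDom U) ∧ closure (effDom U) ≠ univ ∧
    ∀ x x' : Euc d, x' - x ∈ closure (effDom U) → U x ≤ U x'

/-- The dual function `U*(x*) = sup_x { U(x) - ⟨x, x*⟩ }`. -/
def dualFn (U : Euc d → EReal) (y : Euc d) : EReal :=
  ⨆ x : Euc d, U x - ((⟪x, y⟫ : ℝ) : EReal)

/-- The effective domain of the dual function, `dom(U*) = {x* : U*(x*) < ∞}`. -/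
def effDomStar (U : Euc d → EReal) : Set (Euc d) := {y | dualFn U y ≠ ⊤}

/-- The superdifferential `∂U(x) = {x* : U(z) ≤ U(x) + ⟨z-x, x*⟩ ∀ z}`. -/
def superdiff (U : Euc d → EReal) (x : Euc d) : Set (Euc d) :=
  {g | ∀ z : Euc d, U z ≤ U x + ((⟪z - x, g⟫ : ℝ) : EReal)}

/-- The closure `cl(U)` of `U`: the function whose hypograph is the closure of the
hypograph of `U`. -/
def clFn (U : Euc d → EReal) (x : Euc d) : EReal :=
  ⨆ r ∈ {r : ℝ | (x, r) ∈ closure (hypograph U)}, (r : EReal)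

/-- `U` is asymptotically satiable: for every `ε > 0` there is `x` such that
`∂(cl U)(x) ∩ [0,ε)^d ≠ ∅`. -/
def AsympSatiable (U : Euc d → EReal) : Prop :=
  ∀ ε : ℝ, 0 < ε → ∃ x : Euc d, ∃ g ∈ superdiff (clFn U) x, ∀ i, 0 ≤ g i ∧ g i < ε

/-- `U` is essentially smooth: `int(dom U)` is nonempty, `U` is differentiable (with
gradient `g`) throughout `int(dom U)`, and `|∇U(xₙ)| → ∞` along every sequence in
`int(dom U)` converging to a boundary point of `int(dom U)`. -/
def EssSmooth (U : Euc d → EReal) : Prop :=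
  (interior (effDom U)).Nonempty ∧
  ∃ g : Euc d → Euc d,
    (∀ x ∈ interior (effDom U), HasGradientAt (fun y => (U y).toReal) (g x) x) ∧
    ∀ (x : ℕ → Euc d) (b : Euc d), (∀ n, x n ∈ interior (effDom U)) →
      b ∈ frontier (interior (effDom U)) → Tendsto x atTop (𝓝 b) →
      Tendsto (fun n => ‖g (x n)‖) atTop atTop

/-- The vector `(1, …, 1)`. -/
def onesVec (d : ℕ) : Euc d := WithLp.toLp 2 fun _ => 1

lemma onesVec_apply (i : Fin d) : onesVec d i = 1 := rfl

lemma inner_onesVec (g : Euc d) : ⟪onesVec d, g⟫ = ∑ i, g i := by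
  simp [PiLp.inner_apply, onesVec]

lemma effDom_eq_fst_image (U : Euc d → EReal) : effDom U = Prod.fst '' hypograph U := by
  ext x
  constructor
  · intro hx
    by_cases ht : U x = ⊤
    · exact ⟨(x, 0), by simp [hypograph, ht], rfl⟩
    · exact ⟨(x, (U x).toReal), (EReal.coe_toReal ht hx).le, rfl⟩
  · rintro ⟨⟨y, r⟩, hr, rfl⟩ hb
    simp only [hypograph, mem_ofPred_eq] at hr hb
    rw [hb] at hr
    exact EReal.coe_ne_bot r (le_bot_iff.1 hr)

lemma convex_effDom {U : Euc d → EReal} (hc : Convex ℝ (hypograph U)) :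
    Convex ℝ (effDom U) := by
  rw [effDom_eq_fst_image]
  exact hc.linear_image (LinearMap.fst ℝ (Euc d) ℝ)

lemma exists_mem_hypograph {U : Euc d → EReal} {x : Euc d} (hx : x ∈ effDom U) :
    ∃ r : ℝ, (x, r) ∈ hypograph U := by
  rw [effDom_eq_fst_image] at hx
  obtain ⟨⟨y, r⟩, hr, rfl⟩ := hx
  exact ⟨r, hr⟩

lemma isOpen_forall_lt (a : Euc d) : IsOpen {z : Euc d | ∀ i, a i < z i} := by
  simp only [ofPred_forall]
  exact isOpen_iInter_of_finite fun i => isOpen_lt continuous_const (by fun_prop)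

lemma add_onesVec_mem_interior_hypograph {U : Euc d → EReal} (hU : IsUtility U)
    {x : Euc d} {r : ℝ} (hx : (x, r) ∈ hypograph U) :
    (x + onesVec d, r - 1) ∈ interior (hypograph U) := by
  obtain ⟨-, -, hpos, -, hmono⟩ := hU
  refine mem_interior.2 ⟨{z : Euc d | ∀ i, x i < z i} ×ˢ Iio r, ?_,
    (isOpen_forall_lt x).prod isOpen_Iio, ?_⟩
  · rintro ⟨z, s⟩ ⟨hz, hs⟩
    have h1 : U x ≤ U z := hmono x z (hpos fun i => by
      simpa using (hz i).le)
    have h2 : (s : EReal) ≤ r := EReal.coe_le_coe_iff.2 (le_of_lt hs)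
    exact h2.trans (le_trans hx h1)
  · exact ⟨fun i => by simp [onesVec_apply], by simp⟩

lemma interior_effDom_nonempty {U : Euc d → EReal} (hU : IsUtility U) :
    (interior (effDom U)).Nonempty := by
  obtain ⟨x, hx⟩ := hU.1.2.2
  obtain ⟨r, hr⟩ := exists_mem_hypograph (U := U) hx
  refine ⟨x + onesVec d, interior_maximal ?_ (isOpenMap_fst _ isOpen_interior)
    ⟨_, add_onesVec_mem_interior_hypograph hU hr, rfl⟩⟩
  rw [effDom_eq_fst_image]
  exact image_mono interior_subset

/-- Translating by `(1, …, 1)` moves every point of the support cone into `int (dom U)`. -/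
lemma add_onesVec_mem_interior {U : Euc d → EReal} (hU : IsUtility U) {x : Euc d}
    (hx : x ∈ closure (effDom U)) : x + onesVec d ∈ interior (effDom U) := by
  have hconv := convex_effDom hU.1.1
  rw [← hconv.interior_closure_eq_interior_of_nonempty_interior (interior_effDom_nonempty hU)]
  refine mem_interior.2 ⟨{z : Euc d | ∀ i, x i < z i}, fun z hz => ?_, isOpen_forall_lt x,
    fun i => by simp [onesVec_apply]⟩
  have h1 : z - x ∈ closure (effDom U) := hU.2.2.1 fun i => by
    simpa using (hz i).le
  simpa using hU.2.1 1 1 zero_le_one zero_le_one x hx (z - x) h1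

/-- Supergradients are the affine majorants of the hypograph touching it at `x`. -/
lemma mem_superdiff_of_forall {U : Euc d → EReal} (ht : ∀ x, U x ≠ ⊤) {x g : Euc d} {u : ℝ}
    (hu : U x = u) (h : ∀ z r, (z, r) ∈ hypograph U → r ≤ u + ⟪z - x, g⟫) :
    g ∈ superdiff U x := by
  intro z
  by_cases hb : U z = ⊥
  · simp [hb]
  · have h1 := h z (U z).toReal (EReal.coe_toReal (ht z) hb).le
    rw [hu, ← EReal.coe_toReal (ht z) hb, ← EReal.coe_add]
    exact EReal.coe_le_coe_iff.2 h1

/-- A utility function is superdifferentiable on the interior of its effective domain. -/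
lemma exists_mem_superdiff {U : Euc d → EReal} (hU : IsUtility U) {x : Euc d}
    (hx : x ∈ interior (effDom U)) : (superdiff U x).Nonempty := by
  have ht := hU.1.2.1
  have hb : U x ≠ ⊥ := interior_subset hx
  obtain ⟨u, hu⟩ : ∃ u : ℝ, U x = u := ⟨_, (EReal.coe_toReal (ht x) hb).symm⟩
  obtain ⟨p, hp⟩ : (interior (hypograph U)).Nonempty :=
    ⟨_, add_onesVec_mem_interior_hypograph hU (x := x) (r := u) hu.ge⟩
  have hnot : (x, u) ∉ interior (hypograph U) := by
    intro hmem
    have hc : Tendsto (fun t : ℝ => (x, u + t)) (𝓝[>] 0) (𝓝 (x, u)) := by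
      have : Continuous fun t : ℝ => (x, u + t) := by fun_prop
      simpa using (this.tendsto 0).mono_left nhdsWithin_le_nhds
    have hev := hc.eventually (isOpen_interior.mem_nhds hmem)
    obtain ⟨t, h1, h2⟩ := (hev.and self_mem_nhdsWithin).exists
    have h1' : (x, u + t) ∈ hypograph U := interior_subset (s := hypograph U) h1
    have h3 : ((u + t : ℝ) : EReal) ≤ U x := h1'
    rw [hu, EReal.coe_le_coe_iff] at h3
    have h4 : 0 < t := h2
    linarith
  obtain ⟨f, hf⟩ := geometric_hahn_banach_open_point hU.1.1.interior isOpen_interior hnot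
  have hle : ∀ q ∈ hypograph U, f q ≤ f (x, u) := by
    intro q hq
    have hq' : q ∈ closure (interior (hypograph U)) := by
      rw [hU.1.1.closure_interior_eq_closure_of_nonempty_interior ⟨p, hp⟩]
      exact subset_closure hq
    exact closure_minimal (fun y hy => (hf y hy).le)
      (isClosed_le f.continuous continuous_const) hq'
  set a : ℝ := f (0, 1) with ha
  have hsplit : ∀ z r, f (z, r) = f (z, 0) + r * a := by
    intro z r
    have : ((z, r) : Euc d × ℝ) = (z, 0) + r • (0, 1) := by simp
    rw [this, map_add, map_smul, smul_eq_mul]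
  have ha0 : 0 ≤ a := by
    have h1 := hle (x, u - 1) (by
      change ((u - 1 : ℝ) : EReal) ≤ U x
      rw [hu, EReal.coe_le_coe_iff]
      linarith)
    rw [hsplit, hsplit x u] at h1
    linarith
  -- A vertical hyperplane (`a = 0`) is impossible: moving from `x` slightly away from the
  -- base point of `p` stays in `dom U` but increases `f`.
  have hapos : 0 < a := by
    refine lt_of_le_of_ne ha0 fun h0 => ?_
    have hc : Tendsto (fun t : ℝ => x + t • (x - p.1)) (𝓝[>] 0) (𝓝 x) := by
      have : Continuous fun t : ℝ => x + t • (x - p.1) := by fun_prop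
      simpa using (this.tendsto 0).mono_left nhdsWithin_le_nhds
    have hev := hc.eventually (isOpen_interior.mem_nhds hx)
    obtain ⟨t, h1, h2⟩ := (hev.and self_mem_nhdsWithin).exists
    have h2' : 0 < t := h2
    obtain ⟨r, hr⟩ := exists_mem_hypograph (interior_subset h1)
    have h3 := hle _ hr
    have h4 := hf p hp
    rw [hsplit, hsplit x u, ← h0] at h3
    rw [← Prod.mk.eta (p := p), hsplit, hsplit x u, ← h0] at h4
    have h5 : ((x + t • (x - p.1), 0) : Euc d × ℝ) = (x, 0) + t • ((x, 0) - (p.1, 0)) := by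
      simp
    rw [h5, map_add, map_smul, map_sub, smul_eq_mul] at h3
    nlinarith
  set v : Euc d := (InnerProductSpace.toDual ℝ (Euc d)).symm
    (f.comp (ContinuousLinearMap.inl ℝ (Euc d) ℝ)) with hv
  have hvin : ∀ z, ⟪z, v⟫ = f (z, 0) := by
    intro z
    rw [real_inner_comm, hv, InnerProductSpace.toDual_symm_apply]
    rfl
  refine ⟨-(a⁻¹ • v), mem_superdiff_of_forall ht hu fun z r hr => ?_⟩
  have h1 := hle _ hr
  rw [hsplit, hsplit x u, ← hvin, ← hvin] at h1
  rw [inner_neg_right, inner_smul_right, inner_sub_left]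
  have h2 : a⁻¹ * (⟪z, v⟫ + r * a) ≤ a⁻¹ * (⟪x, v⟫ + u * a) :=
    mul_le_mul_of_nonneg_left h1 (inv_nonneg.2 ha0)
  have h3 : a⁻¹ * a = 1 := inv_mul_cancel₀ hapos.ne'
  linear_combination h2 + (u - r) * h3

/-- An affine majorant of `U` is also an affine majorant of `cl U`. -/
lemma clFn_le_of_mem_superdiff {U : Euc d → EReal} {x g : Euc d} {u : ℝ}
    (hu : U x = u) (hg : g ∈ superdiff U x) (z : Euc d) :
    clFn U z ≤ ((u + ⟪z - x, g⟫ : ℝ) : EReal) := by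
  refine iSup₂_le fun r hr => EReal.coe_le_coe_iff.2 ?_
  have hclosed : IsClosed {q : Euc d × ℝ | q.2 ≤ u + ⟪q.1 - x, g⟫} :=
    isClosed_le (by fun_prop) (by fun_prop)
  refine closure_minimal (fun q hq => ?_) hclosed hr
  have h1 : (q.2 : EReal) ≤ U x + ((⟪q.1 - x, g⟫ : ℝ) : EReal) := le_trans hq (hg q.1)
  rwa [hu, ← EReal.coe_add, EReal.coe_le_coe_iff] at h1

lemma le_clFn {U : Euc d → EReal} {x : Euc d} {u : ℝ} (hu : U x = u) : (u : EReal) ≤ clFn U x :=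
  le_iSup₂_of_le (f := fun (r : ℝ) (_ : r ∈ {r : ℝ | (x, r) ∈ closure (hypograph U)}) =>
    (r : EReal)) u (subset_closure (show (u : EReal) ≤ U x from hu.ge)) le_rfl

lemma mem_closure_effDom_of_clFn_ne_bot {U : Euc d → EReal} {x : Euc d} (hx : clFn U x ≠ ⊥) :
    x ∈ closure (effDom U) := by
  by_contra hn
  refine hx (le_bot_iff.1 (iSup₂_le fun r hr => ?_))
  refine absurd ?_ hn
  rw [effDom_eq_fst_image]
  exact image_closure_subset_closure_image continuous_fst ⟨_, hr, rfl⟩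

/-- Supergradients of a function nondecreasing along the orthant are nonnegative. -/
lemma nonneg_of_mem_superdiff {U : Euc d → EReal} (hU : IsUtility U) {x g : Euc d} {u : ℝ}
    (hu : U x = u) (hg : g ∈ superdiff U x) (i : Fin d) : 0 ≤ g i := by
  have h1 := hU.2.2.2.2 x (x + EuclideanSpace.single i 1) (hU.2.2.1 fun j => by
    by_cases hj : j = i <;> simp [hj])
  have h2 := h1.trans (hg _)
  rw [hu, ← EReal.coe_add, EReal.coe_le_coe_iff, add_sub_cancel_left,
    EuclideanSpace.inner_single_left] at h2
  simpa using h2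

/-- If a utility function `U` is upper semi-continuous or essentially smooth, and
asymptotically satiable, then for every `ε > 0` there is `x ∈ int(dom U)` whose
superdifferential `∂U(x)` meets `[0,ε)^d`. -/
theorem superdiff_interior_of_asympSatiable
    (U : Euc d → EReal) (hU : IsUtility U)
    (hreg : UpperSemicontinuous U ∨ EssSmooth U)
    (hAS : AsympSatiable U) :
    ∀ ε : ℝ, 0 < ε → ∃ x ∈ interior (effDom U),
      ∃ g ∈ superdiff U x, ∀ i, 0 ≤ g i ∧ g i < ε := by
  intro ε hε
  have hd : (0 : ℝ) < d + 1 := by positivity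
  -- The `d` coordinates of `g` have to sum to less than `ε`, also when `d = 0`.
  obtain ⟨x, g, hg, hgi⟩ := hAS (ε / (d + 1)) (by positivity)
  have hclb : clFn U x ≠ ⊥ := by
    intro hb
    obtain ⟨y, hy⟩ := interior_effDom_nonempty hU
    have h1 := hg y
    rw [hb, EReal.bot_add] at h1
    have h2 := le_clFn (EReal.coe_toReal (hU.1.2.1 y) (interior_subset hy)).symm
    exact EReal.coe_ne_bot _ (le_bot_iff.1 (h2.trans h1))
  have hx' := add_onesVec_mem_interior hU (mem_closure_effDom_of_clFn_ne_bot hclb)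
  obtain ⟨g', hg'⟩ := exists_mem_superdiff hU hx'
  obtain ⟨u, hu⟩ : ∃ u : ℝ, U (x + onesVec d) = u :=
    ⟨_, (EReal.coe_toReal (hU.1.2.1 _) (interior_subset hx')).symm⟩
  have hnn := nonneg_of_mem_superdiff hU hu hg'
  refine ⟨_, hx', g', hg', fun i => ⟨hnn i, ?_⟩⟩
  have h1 := clFn_le_of_mem_superdiff hu hg' x
  have h2 := (le_clFn hu).trans (hg _)
  have h3 := h2.trans (add_le_add_left h1 _)
  rw [← EReal.coe_add, EReal.coe_le_coe_iff, sub_add_cancel_left, add_sub_cancel_left,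
    inner_neg_left, inner_onesVec, inner_onesVec] at h3
  calc g' i ≤ ∑ j, g' j := Finset.single_le_sum (fun j _ => hnn j) (Finset.mem_univ i)
    _ ≤ ∑ j, g j := by linarith
    _ ≤ ∑ _j : Fin d, ε / (d + 1) := Finset.sum_le_sum fun j _ => (hgi j).2.le
    _ = d * (ε / (d + 1)) := by simp
    _ < ε := by
      rw [mul_div_assoc', div_lt_iff₀ hd]
      nlinarith
end
end

section
/- Let U : ℝ^d → [-∞,∞) be a multivariate utility function with dual function U*(x*) := sup_{x∈ℝ^d} { U(x) − ⟨x, x*⟩ }. If the closure of dom(U*) := {x* : U*(x*) < ∞} is a convex cone, then U is asymptotically satiable. -/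
/-!
The dual domain `dom U*` consists of the slopes of the affine majorants of `U`, and it lies in the
nonnegative orthant because `U` is nondecreasing along the orthant. It is nonempty: monotonicity
gives the hypograph an interior point, and a hyperplane supporting the hypograph above that point
is not vertical. Since its closure is a cone, `dom U*` therefore contains points `y` of
arbitrarily small norm.

Such a `y` is turned into a supergradient by a quadratic perturbation, as in the
Brøndsted–Rockafellar theorem. For `δ > 0`, the function `r - ⟪x, y⟫ - (δ/2)‖x‖²` attains its
maximum over the closed hypograph at some `(x, r)`; the first-order condition says that
`y + δ x` is a supergradient of `cl U` at `x`. Comparing the maximum with the value at a fixed point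
bounds `δ‖x‖²` independently of `δ ≤ 1`, so `δ x → 0` as `δ → 0`. Finally `y + δ x`, being the
slope of an affine majorant of `U`, lies in `dom U*` and so has nonnegative coordinates.
-/

open Set Filter Topology
open scoped RealInnerProductSpace

noncomputable section

variable {d : ℕ}

/-- `dom(U*)` is the set of slopes of affine majorants of `U`, phrased on the hypograph. -/
lemma mem_effDomStar_iff (U : Euc d → EReal) (hT : ∀ x, U x ≠ ⊤) (y : Euc d) :
    y ∈ effDomStar U ↔ ∃ M : ℝ, ∀ p ∈ hypograph U, p.2 - ⟪p.1, y⟫ ≤ M := by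
  constructor
  · intro hy
    refine ⟨(dualFn U y).toReal, fun p hp => ?_⟩
    have h1 : ((p.2 - ⟪p.1, y⟫ : ℝ) : EReal) ≤ dualFn U y := by
      refine le_trans ?_ (le_iSup (fun x : Euc d => U x - ((⟪x, y⟫ : ℝ) : EReal)) p.1)
      rw [EReal.coe_sub]
      exact EReal.sub_le_sub hp le_rfl
    exact EReal.coe_le_coe_iff.1 (h1.trans (EReal.le_coe_toReal hy))
  · rintro ⟨M, hM⟩
    have h1 : dualFn U y ≤ (M : EReal) := by
      refine iSup_le fun x => ?_
      by_cases hx : U x = ⊥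
      · rw [hx]; simp
      · have h2 := EReal.coe_toReal (hT x) hx
        have h3 := hM (x, (U x).toReal) (by simp only [hypograph, mem_ofPred_eq]; exact h2.le)
        rw [← h2, ← EReal.coe_sub]
        exact EReal.coe_le_coe_iff.2 h3
    exact ne_top_of_le_ne_top (EReal.coe_ne_top M) h1

/-- Along `x₀ + t eᵢ` the function `U` does not decrease, so no affine majorant can have a negative
`i`-th slope. -/
lemma effDomStar_nonneg (U : Euc d → EReal) (hU : IsUtility U) (y : Euc d)
    (hy : y ∈ effDomStar U) (i : Fin d) : 0 ≤ y i := by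
  obtain ⟨⟨-, hT, x₀, hx₀⟩, -, hpos, -, hmono⟩ := hU
  obtain ⟨M, hM⟩ := (mem_effDomStar_iff U hT y).1 hy
  by_contra! hneg
  have key : ∀ t : ℝ, 0 ≤ t → (U x₀).toReal - ⟪x₀, y⟫ - t * y i ≤ M := by
    intro t ht
    have h1 : U x₀ ≤ U (x₀ + EuclideanSpace.single i t) := by
      apply hmono
      apply hpos
      intro j
      by_cases hj : j = i
      · subst hj; simpa using ht
      · simp [hj]
    have h2 := hM (x₀ + EuclideanSpace.single i t, (U x₀).toReal) (by
      simp only [hypograph, mem_ofPred_eq]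
      rw [EReal.coe_toReal (hT x₀) hx₀]
      exact h1)
    simp only [inner_add_left, EuclideanSpace.inner_single_left] at h2
    simp only [conj_trivial] at h2
    linarith
  have h0 := key 0 le_rfl
  have h1 := key ((M - ((U x₀).toReal - ⟪x₀, y⟫) + 1) / (-y i))
    (div_nonneg (by linarith) (by linarith))
  have h2 : (M - ((U x₀).toReal - ⟪x₀, y⟫) + 1) / (-y i) * y i
      = -(M - ((U x₀).toReal - ⟪x₀, y⟫) + 1) := by
    field_simp [hneg.ne]
  linarith

/-- By monotonicity along the orthant, the hypograph of a utility function contains the translate of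
the open orthant times an open half-line with apex at any point of the graph, hence
a nonempty open set. -/
lemma interior_hypograph_nonempty (U : Euc d → EReal) (hU : IsUtility U) :
    (interior (hypograph U)).Nonempty := by
  obtain ⟨⟨-, hT, x₀, hx₀⟩, -, hpos, -, hmono⟩ := hU
  let O : Set (Euc d × ℝ) := {p | (∀ i, x₀ i < p.1 i) ∧ p.2 < (U x₀).toReal}
  have hO : IsOpen O := by
    have h1 : O = (⋂ i, {p : Euc d × ℝ | x₀ i < p.1 i}) ∩
        {p : Euc d × ℝ | p.2 < (U x₀).toReal} := by
      ext p; simp [O]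
    rw [h1]
    exact (isOpen_iInter_of_finite fun i => isOpen_lt (by fun_prop) (by fun_prop)).inter
      (isOpen_lt (by fun_prop) (by fun_prop))
  have hsub : O ⊆ hypograph U := by
    rintro p ⟨h1, h2⟩
    have h3 : U x₀ ≤ U p.1 := by
      apply hmono
      apply hpos
      intro i
      simpa using (h1 i).le
    refine le_trans ?_ h3
    rw [← EReal.coe_toReal (hT x₀) hx₀]
    exact EReal.coe_le_coe_iff.2 h2.le
  refine ⟨(x₀ + WithLp.toLp 2 (fun _ => 1), (U x₀).toReal - 1),
    interior_maximal hsub hO ⟨fun i => ?_, ?_⟩⟩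
  · simp
  · simp

/-- A hyperplane supporting the hypograph at a point above one of its interior points is not
vertical, hence is the graph of an affine majorant. -/
lemma effDomStar_nonempty (U : Euc d → EReal) (hU : IsUtility U) : (effDomStar U).Nonempty := by
  have hT := hU.1.2.1
  have hconv := hU.1.1
  have hne := interior_hypograph_nonempty U hU
  obtain ⟨⟨x₁, s₁⟩, hp₁⟩ := hne
  have hs₁ : (s₁ : EReal) ≤ U x₁ := by
    have h1 : (x₁, s₁) ∈ hypograph U := interior_subset hp₁
    exact h1
  have hx₁ : U x₁ ≠ ⊥ := fun h => by rw [h] at hs₁; simp at hs₁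
  have hu := EReal.coe_toReal (hT x₁) hx₁
  set u := (U x₁).toReal
  have hs₁u : s₁ ≤ u := by rw [← hu] at hs₁; exact EReal.coe_le_coe_iff.1 hs₁
  have hnot : (x₁, u) ∉ interior (hypograph U) := by
    intro hmem
    have h1 : ∀ᶠ t in 𝓝 u, (x₁, t) ∈ hypograph U := by
      have hc : Continuous fun t : ℝ => ((x₁, t) : Euc d × ℝ) := by fun_prop
      exact hc.continuousAt.eventually (mem_interior_iff_mem_nhds.1 hmem)
    have h2 : ∀ᶠ t in 𝓝[>] u, (x₁, t) ∈ hypograph U := h1.filter_mono nhdsWithin_le_nhds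
    obtain ⟨t, ht, htu⟩ := (h2.and self_mem_nhdsWithin).exists
    have h3 : (t : EReal) ≤ U x₁ := ht
    rw [← hu] at h3
    exact absurd (EReal.coe_le_coe_iff.1 h3) (not_le.2 htu)
  obtain ⟨L, hL⟩ := geometric_hahn_banach_open_point hconv.interior isOpen_interior hnot
  have hLle : ∀ q ∈ hypograph U, L q ≤ L (x₁, u) := by
    intro q hq
    have h1 : q ∈ closure (interior (hypograph U)) := by
      rw [hconv.closure_interior_eq_closure_of_nonempty_interior ⟨_, hp₁⟩]
      exact subset_closure hq
    have h2 : closure (interior (hypograph U)) ⊆ {q | L q ≤ L (x₁, u)} :=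
      closure_minimal (fun q hq => (hL q hq).le) (isClosed_le L.continuous continuous_const)
    exact h2 h1
  set c := L (0, 1) with hc
  set l : Euc d →L[ℝ] ℝ := L.comp (ContinuousLinearMap.inl ℝ (Euc d) ℝ) with hl
  have hsplit : ∀ (x : Euc d) (r : ℝ), L (x, r) = l x + r * c := by
    intro x r
    have h1 : ((x, r) : Euc d × ℝ) = (x, 0) + r • (0, 1) := by simp
    rw [h1, map_add, map_smul]
    simp [hl, hc]
  have hcpos : 0 < c := by
    have h1 := hL _ hp₁
    rw [hsplit, hsplit] at h1
    by_contra! hc0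
    nlinarith
  refine ⟨-(c⁻¹ • (InnerProductSpace.toDual ℝ (Euc d)).symm l), ?_⟩
  rw [mem_effDomStar_iff U hT]
  refine ⟨c⁻¹ * L (x₁, u), ?_⟩
  rintro ⟨x, r⟩ hq
  have h1 := hLle _ hq
  rw [hsplit] at h1
  have h2 : ⟪x, (InnerProductSpace.toDual ℝ (Euc d)).symm l⟫ = l x := by
    rw [real_inner_comm, InnerProductSpace.toDual_symm_apply]
  simp only [inner_neg_right, inner_smul_right, h2]
  calc r - -(c⁻¹ * l x) = c⁻¹ * (l x + r * c) := by field_simp; ring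
    _ ≤ c⁻¹ * L (x₁, u) := by gcongr

/-- The quadratically perturbed function attains its maximum: its superlevel sets in the closed
set `H` are bounded. -/
lemma exists_max_perturbed (H : Set (Euc d × ℝ)) (hH : IsClosed H) (p₀ : Euc d × ℝ) (hp₀ : p₀ ∈ H)
    (y : Euc d) (M δ : ℝ) (hδ : 0 < δ) (hM : ∀ p ∈ H, p.2 - ⟪p.1, y⟫ ≤ M) :
    ∃ p ∈ H, ∀ q ∈ H,
      q.2 - ⟪q.1, y⟫ - δ / 2 * ‖q.1‖ ^ 2 ≤ p.2 - ⟪p.1, y⟫ - δ / 2 * ‖p.1‖ ^ 2 := by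
  let φ : Euc d × ℝ → ℝ := fun q => q.2 - ⟪q.1, y⟫ - δ / 2 * ‖q.1‖ ^ 2
  have hφ : Continuous φ := by fun_prop
  let S : Set (Euc d × ℝ) := H ∩ {q | φ p₀ ≤ φ q}
  have hS : IsClosed S := hH.inter (isClosed_le continuous_const hφ)
  let R := √(2 * (M - φ p₀) / δ)
  have hR : S ⊆ Metric.closedBall 0 R ×ˢ Icc (φ p₀ - R * ‖y‖) (M + R * ‖y‖) := by
    rintro ⟨x, r⟩ ⟨hq, hq'⟩
    have h1 : φ p₀ ≤ r - ⟪x, y⟫ - δ / 2 * ‖x‖ ^ 2 := hq'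
    have h2 : r - ⟪x, y⟫ ≤ M := hM _ hq
    have hx : ‖x‖ ≤ R := by
      apply Real.le_sqrt_of_sq_le
      rw [le_div_iff₀ hδ]
      linarith
    have h3 : |⟪x, y⟫| ≤ R * ‖y‖ := (abs_real_inner_le_norm x y).trans (by gcongr)
    have h4 := abs_le.1 h3
    have h5 : 0 ≤ δ / 2 * ‖x‖ ^ 2 := by positivity
    exact ⟨by simpa using hx, by linarith, by linarith⟩
  have hcomp : IsCompact S :=
    ((isCompact_closedBall _ _).prod isCompact_Icc).of_isClosed_subset hS hR
  obtain ⟨p, hp, hmax⟩ := hcomp.exists_isMaxOn ⟨p₀, hp₀, le_refl (φ p₀)⟩ hφ.continuousOn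
  refine ⟨p, hp.1, fun q hq => ?_⟩
  rcases le_total (φ p₀) (φ q) with h | h
  · exact hmax ⟨hq, h⟩
  · exact h.trans hp.2

/-- First-order condition at a maximizer of the perturbed function over a convex set. -/
lemma support_of_max_perturbed (H : Set (Euc d × ℝ)) (hH : Convex ℝ H) (y x : Euc d) (r δ : ℝ)
    (hp : (x, r) ∈ H)
    (hmax : ∀ q ∈ H, q.2 - ⟪q.1, y⟫ - δ / 2 * ‖q.1‖ ^ 2 ≤ r - ⟪x, y⟫ - δ / 2 * ‖x‖ ^ 2)
    (z : Euc d) (s : ℝ) (hq : (z, s) ∈ H) : s ≤ r + ⟪z - x, y + δ • x⟫ := by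
  -- Maximality along the segment from `(x, r)` to `(z, s)`, divided by the parameter `t`.
  have key : ∀ t : ℝ, t ∈ Ioo (0 : ℝ) 1 →
      s - r - ⟪z - x, y + δ • x⟫ ≤ t * (δ / 2 * ‖z - x‖ ^ 2) := by
    rintro t ⟨ht0, ht1⟩
    have h1 : ((x + t • (z - x), r + t * (s - r)) : Euc d × ℝ) ∈ H := by
      have := hH.add_smul_sub_mem hp hq ⟨ht0.le, ht1.le⟩
      simpa using this
    have h2 := hmax _ h1
    simp only [norm_add_sq_real, inner_add_left, inner_smul_left, inner_smul_right, norm_smul,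
      conj_trivial, mul_pow, Real.norm_eq_abs, sq_abs] at h2
    simp only [inner_add_right, inner_smul_right]
    rw [real_inner_comm x (z - x)] at *
    have h3 : t * (s - r - (⟪z - x, y⟫ + δ * ⟪x, z - x⟫))
        ≤ t * (t * (δ / 2 * ‖z - x‖ ^ 2)) := by nlinarith
    have h4 := le_of_mul_le_mul_left h3 ht0
    simpa only [real_inner_comm] using h4
  have hlim : Tendsto (fun t : ℝ => t * (δ / 2 * ‖z - x‖ ^ 2)) (𝓝[>] 0) (𝓝 0) := by
    have hc : Continuous fun t : ℝ => t * (δ / 2 * ‖z - x‖ ^ 2) := by fun_prop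
    simpa using (hc.tendsto 0).mono_left nhdsWithin_le_nhds
  have := ge_of_tendsto hlim
    (Filter.eventually_of_mem (Ioo_mem_nhdsGT (zero_lt_one' ℝ)) key)
  linarith

/-- If `cl(dom U*)` is a convex cone, then the utility function `U` is asymptotically
satiable. -/
theorem asympSatiable_of_closure_domStar_isConvexCone
    (U : Euc d → EReal) (hU : IsUtility U)
    (h : IsConvexCone (closure (effDomStar U))) :
    AsympSatiable U := by
  intro ε hε
  have hT := hU.1.2.1
  obtain ⟨y₀, hy₀⟩ := effDomStar_nonempty U hU
  have hzero : (0 : Euc d) ∈ closure (effDomStar U) := by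
    simpa using h 0 0 le_rfl le_rfl y₀ (subset_closure hy₀) y₀ (subset_closure hy₀)
  obtain ⟨y, hy, hyε⟩ := Metric.mem_closure_iff.1 hzero (ε / 2) (by positivity)
  rw [dist_zero_left] at hyε
  obtain ⟨M, hM⟩ := (mem_effDomStar_iff U hT y).1 hy
  obtain ⟨⟨x₀, r₀⟩, hp₀⟩ := (interior_hypograph_nonempty U hU).mono interior_subset
  have hM' : ∀ p ∈ closure (hypograph U), p.2 - ⟪p.1, y⟫ ≤ M := fun p hp =>
    closure_minimal (t := {p : Euc d × ℝ | p.2 - ⟪p.1, y⟫ ≤ M}) hM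
      (isClosed_le (by fun_prop) (by fun_prop)) hp
  -- `B` bounds `δ * ‖x‖ ^ 2` at the maximizer `x`, for every `δ ≤ 1`.
  set B : ℝ := 2 * (M - (r₀ - ⟪x₀, y⟫)) + ‖x₀‖ ^ 2 with hB
  have hB0 : 0 ≤ B := by
    have : r₀ - ⟪x₀, y⟫ ≤ M := hM _ hp₀
    have := sq_nonneg ‖x₀‖
    linarith
  obtain ⟨δ, hδ, hδ1, hδ2⟩ : ∃ δ : ℝ, 0 < δ ∧ δ ≤ 1 ∧ δ * (B + 1) ≤ (ε / 2) ^ 2 := by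
    refine ⟨min 1 ((ε / 2) ^ 2 / (B + 1)), by positivity, min_le_left _ _, ?_⟩
    rw [← le_div_iff₀ (by positivity)]
    exact min_le_right _ _
  obtain ⟨⟨x, r⟩, hp, hmax⟩ := exists_max_perturbed (closure (hypograph U)) isClosed_closure
    (x₀, r₀) (subset_closure hp₀) y M δ hδ hM'
  have hsupp := support_of_max_perturbed _ hU.1.1.closure y x r δ hp hmax
  have hxB : δ * ‖x‖ ^ 2 ≤ B := by
    have h1 : r₀ - ⟪x₀, y⟫ - δ / 2 * ‖x₀‖ ^ 2 ≤ r - ⟪x, y⟫ - δ / 2 * ‖x‖ ^ 2 :=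
      hmax _ (subset_closure hp₀)
    have h2 : r - ⟪x, y⟫ ≤ M := hM' _ hp
    have h3 : δ * ‖x₀‖ ^ 2 ≤ 1 * ‖x₀‖ ^ 2 := by gcongr
    linarith
  have hsmall : ‖δ • x‖ < ε / 2 := by
    apply lt_of_pow_lt_pow_left₀ 2 (by positivity)
    rw [norm_smul, Real.norm_of_nonneg hδ.le]
    nlinarith
  have hgstar : y + δ • x ∈ effDomStar U := by
    rw [mem_effDomStar_iff U hT]
    refine ⟨r - ⟪x, y + δ • x⟫, fun q hq => ?_⟩
    have := hsupp q.1 q.2 (subset_closure hq)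
    rw [inner_sub_left] at this
    linarith
  refine ⟨x, y + δ • x, fun z => ?_, fun i => ⟨effDomStar_nonneg U hU _ hgstar i, ?_⟩⟩
  · have h1 : (r : EReal) ≤ clFn U x :=
      le_iSup₂ (f := fun (r : ℝ) (_ : r ∈ {r : ℝ | (x, r) ∈ closure (hypograph U)}) =>
        (r : EReal)) r hp
    refine le_trans (iSup₂_le fun s hs => ?_) (add_le_add h1 le_rfl)
    rw [← EReal.coe_add]
    exact EReal.coe_le_coe_iff.2 (hsupp z s hs)
  · calc (y + δ • x) i ≤ ‖(y + δ • x) i‖ := Real.le_norm_self _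
      _ ≤ ‖y + δ • x‖ := PiLp.norm_apply_le _ i
      _ ≤ ‖y‖ + ‖δ • x‖ := norm_add_le _ _
      _ < ε := by linarith
end
end

section
/- Let U(x) = Σ_{i=1}^d U_i(x_i) be an additive utility function on ℝ^d, where each U_i : ℝ → [-∞,∞) is a univariate utility function supported on ℝ_+ which is upper semi-continuous, strictly concave on (0,∞), essentially smooth, asymptotically satiable, and bounded from below on (0,∞). If each U_i has reasonable asymptotic elasticity, then the dual function U* satisfies the growth condition: there exists ζ : (0,1] → [0,∞) such that U*(ε x*) ≤ ζ(ε) (max(U*(x*), 0) + 1) for all ε ∈ (0,1] and all x* ∈ int(ℝ^d_+). -/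
/-!
The growth condition is verified on the primal side. Reasonable asymptotic elasticity of a
component `v` gives `v + c ≥ γ x v'` for large `x`, with some `γ > 1`, so that
`x ↦ (v x + c) x ^ (-1/γ)` is eventually nonincreasing, i.e.
`v (l z) + c ≤ l ^ (1/γ) (v z + c)` for `l ≥ 1` and `z` large. Choosing `l` with
`l ^ (1/γ) = ε l`, the substitution `x = l z` turns `v x - ε x y` into at most
`ε l (v z - z y + c) - c`; the remaining bounded range of `x` contributes a constant since `v`
is nondecreasing. Hence each competitor `x` for the dual at `ε y` is dominated by a
competitor `z` for the dual at `y` (`exists_dominating_competitor`).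

Since `v 0 ≥ M`, the competitor `z` can be taken with `v z - z y ≥ M`. This makes the
summands `v z - z y - M` nonnegative, so the coordinatewise bounds, whose constants differ, can
be added up with one common constant.
-/

open Set Filter Topology
open scoped RealInnerProductSpace

noncomputable section

variable {d : ℕ}

/-- The dual function `U*` satisfies the growth condition: there is `ζ : (0,1] → [0,∞)`
with `U*(ε x*) ≤ ζ(ε) (U*(x*)⁺ + 1)` for all `ε ∈ (0,1]` and `x* ∈ int(ℝ^d_+)`. -/
def GrowthCondition (U : Euc d → EReal) : Prop :=
  ∃ ζ : ℝ → ℝ, (∀ ε ∈ Set.Ioc (0 : ℝ) 1, 0 ≤ ζ ε) ∧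
    ∀ ε ∈ Set.Ioc (0 : ℝ) 1, ∀ y ∈ interior (posOrthant d),
      dualFn U (ε • y) ≤ (ζ ε : EReal) * (max (dualFn U y) 0 + 1)

/-! ### Univariate notions -/

/-- Hypograph of a univariate `EReal`-valued function. -/
def hypograph1 (V : ℝ → EReal) : Set (ℝ × ℝ) := {p | (p.2 : EReal) ≤ V p.1}

/-- Univariate proper concavity. -/
def ProperConcave1 (V : ℝ → EReal) : Prop :=
  Convex ℝ (hypograph1 V) ∧ (∀ x, V x ≠ ⊤) ∧ (∃ x, V x ≠ ⊥)

/-- Univariate effective domain. -/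
def effDom1 (V : ℝ → EReal) : Set ℝ := {x | V x ≠ ⊥}

/-- A univariate utility function supported on `ℝ_+`: proper concave, with
`cl(dom V) = ℝ_+`, and nondecreasing. -/
def SupportedOnRPlus (V : ℝ → EReal) : Prop :=
  ProperConcave1 V ∧ closure (effDom1 V) = Set.Ici (0 : ℝ) ∧ Monotone V

/-- Univariate superdifferential. -/
def superdiff1 (V : ℝ → EReal) (x : ℝ) : Set ℝ :=
  {g | ∀ z : ℝ, V z ≤ V x + (((z - x) * g : ℝ) : EReal)}

/-- Univariate closure (upper semi-continuous hull). -/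
def clFn1 (V : ℝ → EReal) (x : ℝ) : EReal :=
  ⨆ r ∈ {r : ℝ | (x, r) ∈ closure (hypograph1 V)}, (r : EReal)

/-- Univariate asymptotic satiability: for every `ε > 0` some supergradient of the upper
semi-continuous hull lies in `[0, ε)`. -/
def AsympSatiable1 (V : ℝ → EReal) : Prop :=
  ∀ ε : ℝ, 0 < ε → ∃ x : ℝ, ∃ g ∈ superdiff1 (clFn1 V) x, 0 ≤ g ∧ g < ε

/-- Univariate strict concavity on `(0, ∞)`. -/
def StrictConcaveOnPos (V : ℝ → EReal) : Prop :=
  ∀ x : ℝ, 0 < x → ∀ y : ℝ, 0 < y → x ≠ y →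
    ∀ a b : ℝ, 0 < a → 0 < b → a + b = 1 →
      (a : EReal) * V x + (b : EReal) * V y < V (a * x + b * y)

/-- Univariate essential smoothness, with derivative `g` on `(0,∞)`: `V` is
differentiable on `(0,∞)` and `V'(xₙ) → ∞` along every sequence `xₙ ↓ 0` in `(0,∞)`. -/
def EssSmooth1 (V : ℝ → EReal) (g : ℝ → ℝ) : Prop :=
  (∀ x : ℝ, 0 < x → HasDerivAt (fun y => (V y).toReal) (g x) x) ∧
    ∀ x : ℕ → ℝ, (∀ n, 0 < x n) → Tendsto x atTop (𝓝 0) →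
      Tendsto (fun n => g (x n)) atTop atTop

/-- Univariate reasonable asymptotic elasticity (with derivative `g`):
`sup_{c ∈ ℝ} liminf_{x → ∞} (V(x)+c)/(x V'(x)) > 1`. -/
def ReasonableAsymptoticElasticity1 (V : ℝ → EReal) (g : ℝ → ℝ) : Prop :=
  1 < ⨆ c : ℝ, Filter.liminf
      (fun x : ℝ => ((((V x).toReal + c) / (x * g x) : ℝ) : EReal)) atTop

/-! ### Elasticity and the one-dimensional estimate -/

/-- The elasticity bound says that `x ↦ (v x + c) * x ^ (-γ⁻¹)` has nonpositive derivative on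
`[x₀, ∞)`; comparing its values at `z` and `l * z` gives the scaling estimate. -/
lemma scaling_of_elasticity {v g : ℝ → ℝ} {c γ x₀ : ℝ} (hγ : 1 < γ) (hx₀ : 0 < x₀)
    (hmono : MonotoneOn v (Ici 0)) (hder : ∀ x, 0 < x → HasDerivAt v (g x) x)
    (hel : ∀ x, x₀ ≤ x → γ ≤ (v x + c) / (x * g x)) {z l : ℝ} (hz : x₀ ≤ z) (hl : 1 ≤ l) :
    v (l * z) + c ≤ l ^ γ⁻¹ * (v z + c) := by
  have hγ0 : 0 < γ := by linarith
  have hg : ∀ x, x₀ ≤ x → γ * (x * g x) ≤ v x + c := by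
    intro x hx
    have hx0 : 0 < x := hx₀.trans_le hx
    have h0 : 0 ≤ g x := by
      have h1 := hmono.derivWithin_nonneg (x := x)
      rwa [(hder x hx0).hasDerivWithinAt.derivWithin
        ((uniqueDiffOn_Ici 0) x hx0.le)] at h1
    have h1 := hel x hx
    -- a vanishing derivative would make the quotient `0 < γ`
    have hpos : 0 < g x := by
      rcases h0.eq_or_lt with h | h
      · rw [← h] at h1
        simp at h1
        linarith
      · exact h
    exact (le_div_iff₀ (by positivity)).1 h1
  have hd : ∀ x, 0 < x → HasDerivAt (fun x => (v x + c) * x ^ (-γ⁻¹))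
      (g x * x ^ (-γ⁻¹) + (v x + c) * (-γ⁻¹ * x ^ (-γ⁻¹ - 1))) x := fun x hx =>
    ((hder x hx).add_const c).mul (Real.hasDerivAt_rpow_const (Or.inl hx.ne'))
  have hanti : AntitoneOn (fun x => (v x + c) * x ^ (-γ⁻¹)) (Ici x₀) := by
    apply antitoneOn_of_deriv_nonpos (convex_Ici _)
    · exact fun x hx => (hd x (hx₀.trans_le hx)).continuousAt.continuousWithinAt
    · intro x hx
      rw [interior_Ici] at hx
      exact (hd x (hx₀.trans hx)).differentiableAt.differentiableWithinAt
    · intro x hx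
      rw [interior_Ici] at hx
      have hx0 : 0 < x := hx₀.trans hx
      rw [(hd x hx0).deriv, Real.rpow_sub_one hx0.ne']
      have e : g x * x ^ (-γ⁻¹) + (v x + c) * (-γ⁻¹ * (x ^ (-γ⁻¹) / x)) =
          (γ * (x * g x) - (v x + c)) * (x ^ (-γ⁻¹) / (γ * x)) := by
        field_simp
        ring
      rw [e]
      exact mul_nonpos_of_nonpos_of_nonneg (by linarith [hg x (le_of_lt hx)]) (by positivity)
  have hz0 : 0 < z := hx₀.trans_le hz
  have hl0 : 0 < l := by linarith
  have h := hanti (show z ∈ Ici x₀ from hz)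
    (show l * z ∈ Ici x₀ from hz.trans (by nlinarith)) (by nlinarith)
  simp only at h
  rw [Real.mul_rpow hl0.le hz0.le, ← mul_assoc, Real.rpow_neg hl0.le] at h
  have h2 := le_of_mul_le_mul_right h (by positivity)
  rw [← div_eq_mul_inv, div_le_iff₀ (by positivity)] at h2
  linarith

/-- One-dimensional form of the growth condition: the payoff of `x` at price `ε y` is controlled
by the payoff of some `z` at price `y`, where `z` does at least as well as the lower bound `M`.
The constant `A` depends on `ε` but not on `y`. -/
lemma exists_dominating_competitor {v g : ℝ → ℝ} {c γ x₀ M ε : ℝ} (hγ : 1 < γ) (hx₀ : 0 < x₀)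
    (hmono : MonotoneOn v (Ici 0)) (hder : ∀ x, 0 < x → HasDerivAt v (g x) x)
    (hel : ∀ x, x₀ ≤ x → γ ≤ (v x + c) / (x * g x)) (hM : M ≤ v 0) (hε : 0 < ε) (hε1 : ε ≤ 1) :
    ∃ A : ℝ, 1 ≤ A ∧ ∀ y, 0 < y → ∀ x, 0 ≤ x → ∃ z, 0 ≤ z ∧ M ≤ v z - z * y ∧
      v x - ε * x * y ≤ A * (v z - z * y - M + 1) := by
  have hα : γ⁻¹ < 1 := inv_lt_one_of_one_lt₀ hγ
  -- the solution `l` of `l ^ γ⁻¹ = ε * l`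
  obtain ⟨l, hl, hlε⟩ : ∃ l : ℝ, 1 ≤ l ∧ l ^ γ⁻¹ = ε * l := by
    refine ⟨ε ^ (γ⁻¹ - 1)⁻¹, Real.one_le_rpow_of_pos_of_le_one_of_nonpos hε hε1
      (inv_nonpos.2 (by linarith)), ?_⟩
    have h0 : 0 < ε ^ (γ⁻¹ - 1)⁻¹ := by positivity
    have h1 : (ε ^ (γ⁻¹ - 1)⁻¹) ^ (γ⁻¹ - 1) = ε :=
      Real.rpow_inv_rpow hε.le (by linarith)
    rw [Real.rpow_sub_one h0.ne', div_eq_iff h0.ne'] at h1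
    exact h1
  have hl0 : 0 < l := by linarith
  have hB : 1 ≤ ε * l := by
    rw [← hlε]
    exact Real.one_le_rpow hl (inv_nonneg.2 (by linarith))
  have a1 := abs_nonneg (ε * l * (M + c) - c)
  have a2 := abs_nonneg (v (l * x₀))
  refine ⟨ε * l + |ε * l * (M + c) - c| + |v (l * x₀)|, by linarith, ?_⟩
  intro y hy x hx
  by_cases hxl : l * x₀ ≤ x
  · obtain ⟨z, hz, rfl⟩ : ∃ z, x₀ ≤ z ∧ x = l * z :=
      ⟨x / l, by rw [le_div_iff₀ hl0]; linarith, by field_simp⟩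
    have hs := scaling_of_elasticity hγ hx₀ hmono hder hel hz hl
    rw [hlε] at hs
    obtain ⟨z', hz', hM', hle⟩ : ∃ z', 0 ≤ z' ∧ M ≤ v z' - z' * y ∧
        v z - z * y ≤ v z' - z' * y := by
      by_cases h : M ≤ v z - z * y
      · exact ⟨z, hx₀.le.trans hz, h, le_rfl⟩
      · exact ⟨0, le_rfl, by linarith, by linarith⟩
    refine ⟨z', hz', hM', ?_⟩
    have h1 : ε * l * (v z - z * y) ≤ ε * l * (v z' - z' * y) :=
      mul_le_mul_of_nonneg_left hle (by linarith)
    have h2 := le_abs_self (ε * l * (M + c) - c)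
    have h3 : 0 ≤ v z' - z' * y - M := by linarith
    nlinarith [mul_nonneg a1 h3, mul_nonneg a2 h3]
  · refine ⟨0, le_rfl, by linarith, ?_⟩
    have h1 : v x ≤ v (l * x₀) := hmono hx (show (0 : ℝ) ≤ l * x₀ by positivity) (by linarith)
    have h2 := le_abs_self (v (l * x₀))
    have h3 : 0 ≤ v 0 - M := by linarith
    have h4 : 0 ≤ ε * x * y := by positivity
    nlinarith [mul_nonneg a1 h3, mul_nonneg a2 h3]

/-! ### Extended-valued reductions and the summation over coordinates -/

lemma exists_real_elasticity {V : ℝ → EReal} {g : ℝ → ℝ}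
    (h : ReasonableAsymptoticElasticity1 V g) :
    ∃ c γ x₀ : ℝ, 1 < γ ∧ 0 < x₀ ∧ ∀ x, x₀ ≤ x → γ ≤ ((V x).toReal + c) / (x * g x) := by
  obtain ⟨c, hc⟩ := lt_iSup_iff.1 h
  obtain ⟨γ, h1, h2⟩ := EReal.lt_iff_exists_real_btwn.1 hc
  obtain ⟨a, ha⟩ := eventually_atTop.1 (eventually_lt_of_lt_liminf h2)
  refine ⟨c, γ, max a 1, by exact_mod_cast h1, by positivity, fun x hx => ?_⟩
  exact_mod_cast (ha x ((le_max_left _ _).trans hx)).le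

lemma eq_bot_of_neg {V : ℝ → EReal} (h : SupportedOnRPlus V) {x : ℝ} (hx : x < 0) : V x = ⊥ := by
  by_contra hne
  have h1 : x ∈ closure (effDom1 V) := subset_closure hne
  rw [h.2.1] at h1
  exact absurd h1 (not_le.2 hx)

/-- Upper semi-continuity extends the lower bound from `(0,∞)` to the boundary point `0`. -/
lemma le_of_nonneg {V : ℝ → EReal} (husc : UpperSemicontinuous V) {M : ℝ}
    (hM : ∀ x : ℝ, 0 < x → (M : EReal) ≤ V x) {x : ℝ} (hx : 0 ≤ x) : (M : EReal) ≤ V x := by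
  rcases hx.eq_or_lt with rfl | hx
  · by_contra! hlt
    have h1 : ∀ᶠ y in 𝓝[>] (0 : ℝ), V y < M := nhdsWithin_le_nhds (husc 0 M hlt)
    obtain ⟨y, hy, hy0⟩ := (h1.and self_mem_nhdsWithin).exists
    exact absurd (hM y hy0) (not_le.2 hy)
  · exact hM x hx

lemma pos_of_mem_interior {y : Euc d} (hy : y ∈ interior (posOrthant d)) (i : Fin d) :
    0 < y i := by
  have hc : Continuous fun t : ℝ => y - t • EuclideanSpace.single i (1 : ℝ) := by fun_prop
  have h1 : ∀ᶠ t in 𝓝[>] (0 : ℝ), y - t • EuclideanSpace.single i (1 : ℝ) ∈ posOrthant d := by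
    apply nhdsWithin_le_nhds
    apply hc.continuousAt
    simpa using mem_interior_iff_mem_nhds.1 hy
  obtain ⟨t, ht, ht0⟩ := (h1.and self_mem_nhdsWithin).exists
  have h2 := ht i
  simp at h2
  exact lt_of_lt_of_le ht0 h2

lemma ereal_coe_sum (f : Fin d → ℝ) : ((∑ i, f i : ℝ) : EReal) = ∑ i, (f i : EReal) :=
  map_sum (⟨⟨Real.toEReal, EReal.coe_zero⟩, EReal.coe_add⟩ : ℝ →+ EReal) f _

lemma ereal_sum_eq_bot {f : Fin d → EReal} {i : Fin d} (h : f i = ⊥) : ∑ j, f j = ⊥ := by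
  rw [← Finset.add_sum_erase _ _ (Finset.mem_univ i), h, EReal.bot_add]

/-- If `U(x) = Σᵢ Uᵢ(xᵢ)` is an additive utility function whose components are univariate
utility functions supported on `ℝ_+`, upper semi-continuous, strictly concave on `(0,∞)`,
essentially smooth, asymptotically satiable, bounded from below on `(0,∞)`, and each with
reasonable asymptotic elasticity, then the dual function `U*` satisfies the growth
condition. -/
theorem growthCondition_of_additive_RAE
    (Ui : Fin d → ℝ → EReal) (gi : Fin d → ℝ → ℝ)
    (hsupp : ∀ i, SupportedOnRPlus (Ui i))
    (husc : ∀ i, UpperSemicontinuous (Ui i))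
    (hsc : ∀ i, StrictConcaveOnPos (Ui i))
    (hes : ∀ i, EssSmooth1 (Ui i) (gi i))
    (hAS : ∀ i, AsympSatiable1 (Ui i))
    (hbdd : ∀ i, ∃ M : ℝ, ∀ x : ℝ, 0 < x → (M : EReal) ≤ Ui i x)
    (hrae : ∀ i, ReasonableAsymptoticElasticity1 (Ui i) (gi i)) :
    GrowthCondition (fun x : Euc d => ∑ i, Ui i (x i)) := by
  choose M hM using hbdd
  have hM' : ∀ i x, 0 ≤ x → (M i : EReal) ≤ Ui i x := fun i x hx => le_of_nonneg (husc i) (hM i) hx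
  have hcoe : ∀ i x, 0 ≤ x → ((Ui i x).toReal : EReal) = Ui i x := fun i x hx =>
    EReal.coe_toReal ((hsupp i).1.2.1 x) (ne_bot_of_le_ne_bot (EReal.coe_ne_bot _) (hM' i x hx))
  have hmono : ∀ i, MonotoneOn (fun x => (Ui i x).toReal) (Ici 0) := by
    intro i a ha b hb hab
    have h := (hsupp i).2.2 hab
    rw [← hcoe i a ha, ← hcoe i b hb] at h
    exact_mod_cast h
  have hM0 : ∀ i, M i ≤ (Ui i 0).toReal := by
    intro i
    have h := hM' i 0 le_rfl
    rw [← hcoe i 0 le_rfl] at h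
    exact_mod_cast h
  choose c γ x₀ hγ hx₀ hel using fun i => exists_real_elasticity (hrae i)
  have hkey : ∀ ε : ℝ, ∃ A : Fin d → ℝ, 0 < ε → ε ≤ 1 → ∀ i, 1 ≤ A i ∧ ∀ y, 0 < y → ∀ x, 0 ≤ x →
      ∃ z, 0 ≤ z ∧ M i ≤ (Ui i z).toReal - z * y ∧
      (Ui i x).toReal - ε * x * y ≤ A i * ((Ui i z).toReal - z * y - M i + 1) := by
    intro ε
    by_cases hε : 0 < ε ∧ ε ≤ 1
    · choose A hA using fun i => exists_dominating_competitor (hγ i) (hx₀ i) (hmono i)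
        (hes i).1 (hel i) (hM0 i) hε.1 hε.2
      exact ⟨A, fun _ _ => hA⟩
    · exact ⟨0, fun h1 h2 => absurd ⟨h1, h2⟩ hε⟩
  choose A hA using hkey
  -- `1 + ∑ A` is a common bound for the constants, and the second factor absorbs `∑ (1 - M)`
  set K : ℝ := 1 + |∑ i, (1 - M i)| with hK
  have hK1 : 1 ≤ K := by linarith [abs_nonneg (∑ i, (1 - M i))]
  have hS : ∀ ε ∈ Ioc (0 : ℝ) 1, 0 ≤ ∑ i, A ε i := fun ε hε =>
    Finset.sum_nonneg fun i _ => zero_le_one.trans (hA ε hε.1 hε.2 i).1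
  refine ⟨fun ε => (1 + ∑ i, A ε i) * K, fun ε hε => ?_, fun ε hε y hy => ?_⟩
  · have := hS ε hε
    positivity
  have hSε := hS ε hε
  have hζ : 0 < (1 + ∑ i, A ε i) * K := by positivity
  have hy0 := pos_of_mem_interior hy
  set P := max (dualFn (fun x : Euc d => ∑ i, Ui i (x i)) y) 0 with hP
  have hP0 : 0 ≤ P := le_max_right _ _
  have hDP : dualFn (fun x : Euc d => ∑ i, Ui i (x i)) y ≤ P := le_max_left _ _
  clear_value P
  have hinner : ∀ x y : Euc d, ⟪x, y⟫ = ∑ i, x i * y i := by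
    intro x y
    simp [PiLp.inner_apply, mul_comm]
  have hval : ∀ x : Euc d, (∀ i, 0 ≤ x i) → ∀ y : Euc d,
      ∑ i, Ui i (x i) - ((⟪x, y⟫ : ℝ) : EReal) =
        ((∑ i, ((Ui i (x i)).toReal - x i * y i) : ℝ) : EReal) := by
    intro x hx y
    rw [hinner, Finset.sum_sub_distrib, EReal.coe_sub]
    congr 1
    rw [ereal_coe_sum]
    exact Finset.sum_congr rfl fun i _ => (hcoe i _ (hx i)).symm
  induction P using EReal.rec with
  | bot => simp at hP0
  | top =>
    rw [show (⊤ + 1 : EReal) = ⊤ from EReal.top_add_of_ne_bot (EReal.coe_ne_bot 1),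
      EReal.coe_mul_top_of_pos hζ]
    exact le_top
  | coe p =>
    have hp : 0 ≤ p := by exact_mod_cast hP0
    refine iSup_le fun x => ?_
    by_cases hx : ∀ i, 0 ≤ x i
    · rw [hval x hx]
      choose z hz0 hz1 hz2 using fun i => (hA ε hε.1 hε.2 i).2 (y i) (hy0 i) (x i) (hx i)
      have hD := (le_iSup (fun x : Euc d => ∑ i, Ui i (x i) - ((⟪x, y⟫ : ℝ) : EReal))
        (WithLp.toLp 2 z)).trans hDP
      simp only at hD
      rw [hval _ (fun i => hz0 i)] at hD
      have hD' : ∑ i, ((Ui i (z i)).toReal - z i * y i) ≤ p := by exact_mod_cast hD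
      have hfin : ∑ i, ((Ui i (x i)).toReal - x i * (ε • y) i) ≤
          (1 + ∑ i, A ε i) * K * (p + 1) := by
        calc ∑ i, ((Ui i (x i)).toReal - x i * (ε • y) i)
            ≤ ∑ i, (1 + ∑ i, A ε i) * ((Ui i (z i)).toReal - z i * y i - M i + 1) := by
              refine Finset.sum_le_sum fun i _ => ?_
              have e : x i * (ε • y) i = ε * x i * y i := by
                simp
                ring
              rw [e]
              refine (hz2 i).trans (mul_le_mul_of_nonneg_right ?_ (by linarith [hz1 i]))
              have := Finset.single_le_sum (f := A ε)
                (fun j _ => zero_le_one.trans (hA ε hε.1 hε.2 j).1) (Finset.mem_univ i)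
              linarith
          _ = (1 + ∑ i, A ε i) *
                (∑ i, ((Ui i (z i)).toReal - z i * y i) + ∑ i, (1 - M i)) := by
              rw [← Finset.mul_sum, ← Finset.sum_add_distrib]
              congr 1
              exact Finset.sum_congr rfl fun i _ => by ring
          _ ≤ (1 + ∑ i, A ε i) * (K * (p + 1)) := by
              refine mul_le_mul_of_nonneg_left ?_ (by linarith)
              have := le_abs_self (∑ i, (1 - M i))
              nlinarith [mul_nonneg hp (abs_nonneg (∑ i, (1 - M i)))]
          _ = _ := by ring
      exact_mod_cast hfin
    · push Not at hx
      obtain ⟨i, hi⟩ := hx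
      have hbot : ∑ i, Ui i (x i) = ⊥ := ereal_sum_eq_bot (i := i) (eq_bot_of_neg (hsupp i) hi)
      simp only [hbot, EReal.bot_sub]
      exact bot_le
end
end

section
/- Let U : ℝ^d → [-∞,∞) be a utility function supported on ℝ^d_+ which is upper semi-continuous, strictly concave on int(ℝ^d_+), essentially smooth, and asymptotically satiable, and let U* be its dual function. Then for every x* in the interior of ℝ^d_+: U*(x*) is finite, U* is differentiable at x*, the Fenchel inequality U*(x*) ≥ U(x) − ⟨x, x*⟩ holds for all x ∈ ℝ^d, and equality U*(x*) = U(x) − ⟨x, x*⟩ holds if and only if x = −∇U*(x*). -/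
/-!
For `y` in the open orthant, the dual value is attained and its maximiser is unique; the
gradient of the dual function at `y` is minus that maximiser.

Asymptotic satiability provides affine majorants of `U` with slope smaller than `y`, so
`U - ⟨·, y⟩` is coercive on the orthant, uniformly for prices near `y` (`exists_coercive`). With
upper semicontinuity this gives a maximiser (`exists_isOpt`), hence finiteness of the dual.

A maximiser cannot lie on the boundary of the orthant (`IsOpt.mem_interior`): moving inwards
along `(1, …, 1)`, the gradients of `U` have nonnegative coordinates by monotonicity, and
concavity bounds their sum by that of `y`, contrary to the blow-up required by
essential smoothness. Strict concavity in the interior then makes the maximiser unique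
(`IsOpt.unique`).

Uniqueness, coercivity and upper semicontinuity make the maximiser continuous in the price
(`tendsto_isOpt`). Comparing the optimality inequalities at two prices bounds the linearisation
error of the dual function by the product of the displacements of price and maximiser, which
yields differentiability (`hasGradientAt_dualFn`).
-/

open Set Filter Topology
open scoped RealInnerProductSpace

noncomputable section

variable {d : ℕ}

/-- A utility function supported on `ℝ^d_+`: proper concave, `cl(dom U) = ℝ^d_+`, and
nondecreasing with respect to the preorder induced by `ℝ^d_+`. -/
def SupportedOnOrthant (U : Euc d → EReal) : Prop :=
  ProperConcave U ∧ closure (effDom U) = posOrthant d ∧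
    ∀ x x' : Euc d, x' - x ∈ posOrthant d → U x ≤ U x'

/-- `U` is multivariate risk averse:
`U(x) + U(x+z+z') ≤ U(x+z) + U(x+z')` for all `x` and all `z, z' ≥ 0`. -/
def MultivariateRiskAverse (U : Euc d → EReal) : Prop :=
  ∀ x : Euc d, ∀ z ∈ posOrthant d, ∀ z' ∈ posOrthant d,
    U x + U (x + z + z') ≤ U (x + z) + U (x + z')

/-- `U` has decreasing marginals:
`U(x+z) - U(x) ≥ U(x'+z) - U(x')` whenever `x ∈ dom(U)`, `x' ≽ x` and `z ≥ 0`. -/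
def DecreasingMarginals (U : Euc d → EReal) : Prop :=
  ∀ x ∈ effDom U, ∀ x' : Euc d, x' - x ∈ posOrthant d →
    ∀ z ∈ posOrthant d, U (x' + z) - U x' ≤ U (x + z) - U x

/-- `U` is strictly concave on the interior of `ℝ^d_+`. -/
def StrictConcaveOnIntOrthant (U : Euc d → EReal) : Prop :=
  ∀ x ∈ interior (posOrthant d), ∀ y ∈ interior (posOrthant d), x ≠ y →
    ∀ a b : ℝ, 0 < a → 0 < b → a + b = 1 →
      (a : EReal) * U x + (b : EReal) * U y < U (a • x + b • y)

/-- `U` is essentially smooth, with gradient map `g` on `int(dom U)`: `int(dom U)` is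
nonempty, `U` is differentiable on `int(dom U)` with gradient `g`, and `|∇U(xₙ)| → ∞`
along every sequence in `int(dom U)` converging to a boundary point of `int(dom U)`. -/
def EssSmoothWith (U : Euc d → EReal) (g : Euc d → Euc d) : Prop :=
  (interior (effDom U)).Nonempty ∧
    (∀ x ∈ interior (effDom U), HasGradientAt (fun y => (U y).toReal) (g x) x) ∧
    ∀ (x : ℕ → Euc d) (b : Euc d), (∀ n, x n ∈ interior (effDom U)) →
      b ∈ frontier (interior (effDom U)) → Tendsto x atTop (𝓝 b) →
      Tendsto (fun n => ‖g (x n)‖) atTop atTop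

/-! ### The orthant -/

theorem mem_interior_posOrthant {y : Euc d} :
    y ∈ interior (posOrthant d) ↔ ∀ i, 0 < y i := by
  constructor
  · intro hy i
    have hc : Tendsto (fun t : ℝ => y - t • EuclideanSpace.single i (1 : ℝ)) (𝓝[>] 0) (𝓝 y) := by
      have : Continuous (fun t : ℝ => y - t • EuclideanSpace.single i (1 : ℝ)) := by fun_prop
      simpa using (this.tendsto 0).mono_left nhdsWithin_le_nhds
    have h := hc.eventually (mem_interior_iff_mem_nhds.1 hy)
    obtain ⟨t, ht, ht0⟩ := (h.and self_mem_nhdsWithin).exists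
    have h1 := ht i
    simp at h1
    exact lt_of_lt_of_le ht0 h1
  · intro hy
    have ho : IsOpen {x : Euc d | ∀ i, 0 < x i} := by
      simp only [Set.ofPred_forall]
      exact isOpen_iInter_of_finite fun i => isOpen_lt continuous_const (by fun_prop)
    exact interior_maximal (fun x hx i => (hx i).le) ho hy

/-- On the orthant, the linear functional of a vector whose coordinates are at least `δ`
dominates `δ` times the norm; this coercivity is what bounds the superlevel sets. -/
theorem mul_norm_le_inner {z w : Euc d} {δ : ℝ} (hδ : 0 ≤ δ) (hz : z ∈ posOrthant d)
    (hw : ∀ i, δ ≤ w i) : δ * ‖z‖ ≤ ⟪z, w⟫ := by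
  have h1 : ‖z‖ ≤ ∑ i, z i := by
    rw [EuclideanSpace.norm_eq]
    apply Real.sqrt_le_iff.2
    refine ⟨Finset.sum_nonneg fun i _ => hz i, ?_⟩
    simpa using Finset.sum_sq_le_sq_sum_of_nonneg (s := Finset.univ) (f := fun i => z i)
      (fun i _ => hz i)
  calc δ * ‖z‖ ≤ δ * ∑ i, z i := by gcongr
    _ = ∑ i, δ * z i := Finset.mul_sum _ _ _
    _ ≤ ∑ i, w i * z i := Finset.sum_le_sum fun i _ => by
        have := hz i
        have := hw i
        gcongr
    _ = ⟪z, w⟫ := by simp [PiLp.inner_apply]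

/-! ### Maximisers and the dual value -/

/-- `x` is a maximiser of `U - ⟨·, y⟩`, expressed with real numbers: `toReal` is evaluated
only on the effective domain, where `U` is finite. -/
def IsOpt (U : Euc d → EReal) (y x : Euc d) : Prop :=
  x ∈ effDom U ∧ ∀ z ∈ effDom U, (U z).toReal ≤ (U x).toReal + ⟪z - x, y⟫

section

variable {U : Euc d → EReal}

theorem coe_toReal_of_mem (hp : ProperConcave U) {x : Euc d} (hx : x ∈ effDom U) :
    ((U x).toReal : EReal) = U x :=
  EReal.coe_toReal (hp.2.1 x) hx

theorem concaveOn_toReal (hp : ProperConcave U) :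
    ConcaveOn ℝ (effDom U) (fun x => (U x).toReal) := by
  have key : ∀ x ∈ effDom U, ∀ y ∈ effDom U, ∀ a b : ℝ, 0 ≤ a → 0 ≤ b → a + b = 1 →
      ((a * (U x).toReal + b * (U y).toReal : ℝ) : EReal) ≤ U (a • x + b • y) := by
    intro x hx y hy a b ha hb hab
    have h1 : (x, (U x).toReal) ∈ hypograph U := (coe_toReal_of_mem hp hx).le
    have h2 : (y, (U y).toReal) ∈ hypograph U := (coe_toReal_of_mem hp hy).le
    exact hp.1 h1 h2 ha hb hab
  have hc : ∀ x ∈ effDom U, ∀ y ∈ effDom U, ∀ a b : ℝ, 0 ≤ a → 0 ≤ b → a + b = 1 →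
      a • x + b • y ∈ effDom U := by
    intro x hx y hy a b ha hb hab h
    have := key x hx y hy a b ha hb hab
    rw [h, le_bot_iff] at this
    exact EReal.coe_ne_bot _ this
  refine ⟨fun x hx y hy a b ha hb hab => hc x hx y hy a b ha hb hab, ?_⟩
  intro x hx y hy a b ha hb hab
  have := key x hx y hy a b ha hb hab
  rw [← coe_toReal_of_mem hp (hc x hx y hy a b ha hb hab)] at this
  exact EReal.coe_le_coe_iff.1 this

theorem effDom_subset (hU : SupportedOnOrthant U) : effDom U ⊆ posOrthant d :=
  hU.2.1 ▸ subset_closure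

theorem interior_effDom (hU : SupportedOnOrthant U) (hne : (interior (effDom U)).Nonempty) :
    interior (effDom U) = interior (posOrthant d) := by
  rw [← hU.2.1]
  exact ((concaveOn_toReal hU.1).1.interior_closure_eq_interior_of_nonempty_interior hne).symm

theorem IsOpt.le {x y : Euc d} (hp : ProperConcave U) (h : IsOpt U y x) (z : Euc d) :
    U z ≤ (((U x).toReal + ⟪z - x, y⟫ : ℝ) : EReal) := by
  by_cases hz : z ∈ effDom U
  · rw [← coe_toReal_of_mem hp hz]
    exact EReal.coe_le_coe_iff.2 (h.2 z hz)
  · have : U z = ⊥ := not_not.1 hz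
    simp [this]

theorem IsOpt.dualFn_eq {x y : Euc d} (hp : ProperConcave U) (h : IsOpt U y x) :
    dualFn U y = (((U x).toReal - ⟪x, y⟫ : ℝ) : EReal) := by
  apply le_antisymm
  · refine iSup_le fun z => ?_
    refine (EReal.sub_le_sub (h.le hp z) le_rfl).trans ?_
    rw [← EReal.coe_sub, EReal.coe_le_coe_iff, inner_sub_left]
    linarith
  · rw [EReal.coe_sub, coe_toReal_of_mem hp h.1]
    exact le_iSup (fun x : Euc d => U x - ((⟪x, y⟫ : ℝ) : EReal)) x

theorem isOpt_of_dualFn_eq {x y : Euc d} (hp : ProperConcave U) (hb : dualFn U y ≠ ⊥)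
    (h : dualFn U y = U x - ((⟪x, y⟫ : ℝ) : EReal)) : IsOpt U y x := by
  have hx : x ∈ effDom U := by
    intro hx
    apply hb
    rw [h, hx]
    simp
  refine ⟨hx, fun z hz => ?_⟩
  have h1 : U z - ((⟪z, y⟫ : ℝ) : EReal) ≤ U x - ((⟪x, y⟫ : ℝ) : EReal) :=
    h ▸ le_iSup (fun x : Euc d => U x - ((⟪x, y⟫ : ℝ) : EReal)) z
  rw [← coe_toReal_of_mem hp hz, ← coe_toReal_of_mem hp hx, ← EReal.coe_sub, ← EReal.coe_sub,
    EReal.coe_le_coe_iff] at h1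
  rw [inner_sub_left]
  linarith

/-! ### Coercivity and existence of maximisers -/

theorem clFn_eq_of_usc (hp : ProperConcave U) (husc : UpperSemicontinuous U) : clFn U = U := by
  have hcl : IsClosed (hypograph U) := by
    have h := husc.IsClosed_hypograph
    exact h.preimage (f := fun p : Euc d × ℝ => (p.1, (p.2 : EReal)))
      (continuous_fst.prodMk (continuous_coe_real_ereal.comp continuous_snd))
  funext x
  unfold clFn
  rw [hcl.closure_eq]
  apply le_antisymm
  · exact iSup₂_le fun r hr => hr
  · by_cases hx : x ∈ effDom U
    · have h1 := coe_toReal_of_mem hp hx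
      exact h1.symm.le.trans (le_iSup₂_of_le (U x).toReal h1.le le_rfl)
    · have : U x = ⊥ := not_not.1 hx
      simp [this]

/-- Asymptotic satiability yields affine majorants of `U` with arbitrarily small
slopes. -/
theorem exists_affine_bound (hp : ProperConcave U) (husc : UpperSemicontinuous U)
    (hAS : AsympSatiable U) {ε : ℝ} (hε : 0 < ε) :
    ∃ (c : ℝ) (q : Euc d), (∀ i, q i < ε) ∧ ∀ z ∈ effDom U, (U z).toReal ≤ c + ⟪z, q⟫ := by
  obtain ⟨x, q, hq, hqi⟩ := hAS ε hε
  rw [clFn_eq_of_usc hp husc] at hq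
  have hx : x ∈ effDom U := by
    intro hx
    obtain ⟨z, hz⟩ := hp.2.2
    have := hq z
    rw [hx, EReal.bot_add, le_bot_iff] at this
    exact hz this
  refine ⟨(U x).toReal - ⟪x, q⟫, q, fun i => (hqi i).2, fun z hz => ?_⟩
  have := hq z
  rw [← coe_toReal_of_mem hp hz, ← coe_toReal_of_mem hp hx, ← EReal.coe_add,
    EReal.coe_le_coe_iff, inner_sub_left] at this
  linarith

/-- The coercivity of `U - ⟨·, y⟩` is uniform for `y` near an interior point of the
orthant. -/
theorem exists_coercive (hU : SupportedOnOrthant U) (husc : UpperSemicontinuous U)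
    (hAS : AsympSatiable U) {y : Euc d} (hy : y ∈ interior (posOrthant d)) :
    ∃ (c δ : ℝ), 0 < δ ∧ ∀ᶠ w in 𝓝 y, ∀ z ∈ effDom U,
      (U z).toReal - ⟪z, w⟫ ≤ c - δ * ‖z‖ := by
  rw [mem_interior_posOrthant] at hy
  obtain ⟨δ, hδ, hδy⟩ : ∃ δ : ℝ, 0 < δ ∧ ∀ i, 2 * δ < y i := by
    have h : ∀ᶠ t : ℝ in 𝓝[>] 0, ∀ i, 2 * t < y i := by
      rw [eventually_all]
      intro i
      have hc : Tendsto (fun t : ℝ => 2 * t) (𝓝[>] 0) (𝓝 0) := by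
        have : Continuous (fun t : ℝ => 2 * t) := by fun_prop
        simpa using (this.tendsto 0).mono_left nhdsWithin_le_nhds
      exact hc.eventually (gt_mem_nhds (hy i))
    obtain ⟨t, ht, ht0⟩ := (h.and self_mem_nhdsWithin).exists
    exact ⟨t, ht0, ht⟩
  obtain ⟨c, q, hq, hc⟩ := exists_affine_bound hU.1 husc hAS hδ
  refine ⟨c, δ, hδ, ?_⟩
  have hw : ∀ᶠ w : Euc d in 𝓝 y, ∀ i, 2 * δ < w i := by
    rw [eventually_all]
    intro i
    have : Continuous (fun w : Euc d => w i) := by fun_prop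
    exact (this.tendsto y).eventually (lt_mem_nhds (hδy i))
  filter_upwards [hw] with w hw z hz
  have h1 := mul_norm_le_inner (w := w - q) hδ.le (effDom_subset hU hz) (fun i => by
    have := hw i
    have := hq i
    simp only [PiLp.sub_apply]
    linarith)
  rw [inner_sub_right] at h1
  have := hc z hz
  linarith

theorem exists_isOpt (hU : SupportedOnOrthant U) (husc : UpperSemicontinuous U)
    (hAS : AsympSatiable U) {y : Euc d} (hy : y ∈ interior (posOrthant d)) :
    ∃ x, IsOpt U y x := by
  have hp := hU.1
  obtain ⟨c, δ, hδ, hc⟩ := exists_coercive hU husc hAS hy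
  replace hc := hc.self_of_nhds
  obtain ⟨a, ha : a ∈ effDom U⟩ := hp.2.2
  -- A ball containing `a` and outside of which `U - ⟨·, y⟩` is below its value at `a`.
  set R : ℝ := max ‖a‖ ((c - ((U a).toReal - ⟪a, y⟫)) / δ) with hR
  have husc' : UpperSemicontinuous (fun z : Euc d => U z + ((-⟪z, y⟫ : ℝ) : EReal)) := by
    refine husc.add' ?_ ?_
    · have : Continuous (fun z : Euc d => ((-⟪z, y⟫ : ℝ) : EReal)) :=
        continuous_coe_real_ereal.comp (by fun_prop)
      exact this.upperSemicontinuous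
    · intro x
      exact EReal.continuousAt_add (Or.inl (hp.2.1 x)) (Or.inr (EReal.coe_ne_top _))
  obtain ⟨x, -, hx⟩ :=
    (husc'.upperSemicontinuousOn (Metric.closedBall (0 : Euc d) R)).exists_isMaxOn
      ⟨a, by simp [hR]⟩ (isCompact_closedBall 0 R)
  have hxm : ∀ z ∈ effDom U, ‖z‖ ≤ R →
      (((U z).toReal - ⟪z, y⟫ : ℝ) : EReal) ≤ U x + ((-⟪x, y⟫ : ℝ) : EReal) := by
    intro z hz hzR
    have : U z + ((-⟪z, y⟫ : ℝ) : EReal) ≤ U x + ((-⟪x, y⟫ : ℝ) : EReal) := hx (by simpa using hzR)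
    rw [← coe_toReal_of_mem hp hz, ← EReal.coe_add] at this
    simpa [sub_eq_add_neg] using this
  have hxD : x ∈ effDom U := by
    intro h
    have := hxm a ha (le_max_left _ _)
    rw [h, EReal.bot_add, le_bot_iff] at this
    exact EReal.coe_ne_bot _ this
  have hxm' : ∀ z ∈ effDom U, ‖z‖ ≤ R →
      (U z).toReal - ⟪z, y⟫ ≤ (U x).toReal - ⟪x, y⟫ := by
    intro z hz hzR
    have := hxm z hz hzR
    rw [← coe_toReal_of_mem hp hxD, ← EReal.coe_add, EReal.coe_le_coe_iff] at this
    linarith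
  refine ⟨x, hxD, fun z hz => ?_⟩
  rw [inner_sub_left]
  rcases le_or_gt ‖z‖ R with hzR | hzR
  · have := hxm' z hz hzR
    linarith
  · have h1 := hc z hz
    have h2 := hxm' a ha (le_max_left _ _)
    have h3 : (c - ((U a).toReal - ⟪a, y⟫)) / δ < ‖z‖ := lt_of_le_of_lt (le_max_right _ _) hzR
    rw [div_lt_iff₀ hδ] at h3
    linarith

/-! ### Gradients, and uniqueness of the maximiser -/

theorem tendsto_slope_gradient {g : Euc d} {x : Euc d} {f : Euc d → ℝ} (h : HasGradientAt f g x)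
    (v : Euc d) : Tendsto (fun t : ℝ => t⁻¹ * (f (x + t • v) - f x)) (𝓝[>] 0) (𝓝 ⟪g, v⟫) := by
  have hg : HasDerivAt (fun t : ℝ => f (x + t • v)) ⟪g, v⟫ 0 := by
    have hl : HasDerivAt (fun t : ℝ => x + t • v) v 0 := by
      simpa using ((hasDerivAt_id (0 : ℝ)).smul_const v).const_add x
    have hf := h.hasFDerivAt
    have hx : x = (fun t : ℝ => x + t • v) 0 := by simp
    rw [hx] at hf
    have hcomp : HasDerivAt (fun t : ℝ => f (x + t • v)) _ 0 := hf.comp_hasDerivAt (0 : ℝ) hl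
    simpa using hcomp
  simpa using hg.tendsto_slope_zero_right

theorem gradient_tangent (hp : ProperConcave U) {g x z : Euc d} (hx : x ∈ effDom U)
    (hz : z ∈ effDom U) (hg : HasGradientAt (fun y => (U y).toReal) g x) :
    (U z).toReal ≤ (U x).toReal + ⟪g, z - x⟫ := by
  have h := ge_of_tendsto (b := (U z).toReal - (U x).toReal) (tendsto_slope_gradient hg (z - x)) (by
    have h1 : ∀ᶠ t : ℝ in 𝓝[>] 0, t < 1 := nhdsWithin_le_nhds (gt_mem_nhds one_pos)
    filter_upwards [self_mem_nhdsWithin, h1] with t ht ht1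
    have ht : 0 < t := ht
    have hc := (concaveOn_toReal hp).2 hx hz (sub_nonneg.2 ht1.le) ht.le (by ring)
    have e : (1 - t) • x + t • z = x + t • (z - x) := by module
    rw [e] at hc
    simp only [smul_eq_mul] at hc
    rw [inv_mul_eq_div, le_div_iff₀ ht]
    linarith)
  linarith

theorem gradient_nonneg (hU : SupportedOnOrthant U) {g x : Euc d} (hx : x ∈ effDom U)
    (hg : HasGradientAt (fun y => (U y).toReal) g x) : g ∈ posOrthant d := by
  intro i
  have h := ge_of_tendsto (b := 0)
    (tendsto_slope_gradient hg (EuclideanSpace.single i (1 : ℝ))) (by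
    filter_upwards [self_mem_nhdsWithin] with t ht
    have ht : 0 < t := ht
    have hm : U x ≤ U (x + t • EuclideanSpace.single i (1 : ℝ)) := by
      apply hU.2.2
      intro j
      by_cases hj : j = i
      · subst hj
        simp [ht.le]
      · simp [hj]
    have := EReal.toReal_le_toReal hm hx (hU.1.2.1 _)
    have : 0 ≤ t⁻¹ := by positivity
    apply mul_nonneg this
    linarith)
  simpa [EuclideanSpace.inner_single_right] using h

/-- Essential smoothness excludes maximisers on the boundary: along the ray from a boundary
maximiser in the direction `(1, …, 1)` the gradients have nonnegative coordinates whose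
sum is at most that of `y`, hence stay bounded. -/
theorem IsOpt.mem_interior (hU : SupportedOnOrthant U) {g : Euc d → Euc d}
    (hes : EssSmoothWith U g) {x y : Euc d} (h : IsOpt U y x) :
    x ∈ interior (posOrthant d) := by
  by_contra hx
  have hp := hU.1
  obtain ⟨hne, hgrad, hblow⟩ := hes
  have hint := interior_effDom hU hne
  set e : Euc d := WithLp.toLp 2 (fun _ => (1 : ℝ)) with he
  have hei : ∀ i, e i = 1 := fun i => rfl
  let p : ℕ → Euc d := fun n => x + (1 / ((n : ℝ) + 1)) • e
  have hpos : ∀ n : ℕ, 0 < 1 / ((n : ℝ) + 1) := fun n => by positivity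
  have hpi : ∀ n, p n ∈ interior (effDom U) := by
    intro n
    rw [hint, mem_interior_posOrthant]
    intro i
    have h1 := effDom_subset hU h.1 i
    have h2 := hpos n
    simp only [p, PiLp.add_apply, PiLp.smul_apply, hei, smul_eq_mul, mul_one]
    linarith
  have hpt : Tendsto p atTop (𝓝 x) := by
    have := (tendsto_one_div_add_atTop_nhds_zero_nat (𝕜 := ℝ)).smul_const e
    simpa [p] using this.const_add x
  have hfr : x ∈ frontier (interior (effDom U)) := by
    refine ⟨mem_closure_of_tendsto hpt (Eventually.of_forall hpi), ?_⟩
    rw [interior_interior, hint]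
    exact hx
  have hlim := hblow p x hpi hfr hpt
  obtain ⟨n, hn⟩ := (hlim.eventually (eventually_gt_atTop ⟪e, y⟫)).exists
  have hpn := interior_subset (hpi n)
  have h1 := gradient_tangent hp hpn h.1 (hgrad _ (hpi n))
  have h2 := h.2 _ hpn
  have h3 := mul_norm_le_inner (δ := 1) (w := e) zero_le_one
    (gradient_nonneg hU hpn (hgrad _ (hpi n))) (fun i => (hei i).ge)
  have e1 : x - p n = -((1 / ((n : ℝ) + 1)) • e) := by simp [p]
  have e2 : p n - x = (1 / ((n : ℝ) + 1)) • e := by simp [p]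
  rw [e1, inner_neg_right, inner_smul_right] at h1
  rw [e2, inner_smul_left] at h2
  simp only [conj_trivial] at h2
  have h4 : ⟪g (p n), e⟫ ≤ ⟪e, y⟫ := le_of_mul_le_mul_left (by linarith) (hpos n)
  linarith

theorem IsOpt.unique (hU : SupportedOnOrthant U) (hsc : StrictConcaveOnIntOrthant U)
    {g : Euc d → Euc d} (hes : EssSmoothWith U g) {x x' y : Euc d} (h : IsOpt U y x)
    (h' : IsOpt U y x') : x = x' := by
  by_contra hne
  have hp := hU.1
  have h1 := hsc x (h.mem_interior hU hes) x' (h'.mem_interior hU hes) hne (1 / 2) (1 / 2)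
    (by norm_num) (by norm_num) (by norm_num)
  have h2 := lt_of_lt_of_le h1 (h.le hp _)
  rw [← coe_toReal_of_mem hp h.1, ← coe_toReal_of_mem hp h'.1, ← EReal.coe_mul, ← EReal.coe_mul,
    ← EReal.coe_add, EReal.coe_lt_coe_iff] at h2
  simp only [EReal.toReal_coe] at h2
  have h3 := h'.2 x h.1
  rw [inner_sub_left, inner_add_left, inner_smul_left, inner_smul_left] at h2
  rw [inner_sub_left] at h3
  simp only [conj_trivial] at h2
  linarith

/-! ### Differentiability of the dual function -/

/-- Maximisers depend continuously on the price vector: they stay in a compact set, and by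
upper semicontinuity every cluster point is again a maximiser. -/
theorem tendsto_isOpt (hU : SupportedOnOrthant U) (husc : UpperSemicontinuous U)
    (hsc : StrictConcaveOnIntOrthant U) {g : Euc d → Euc d} (hes : EssSmoothWith U g)
    (hAS : AsympSatiable U) {y x : Euc d} (hy : y ∈ interior (posOrthant d)) (hx : IsOpt U y x)
    {X : Euc d → Euc d} (hX : ∀ᶠ w in 𝓝 y, IsOpt U w (X w)) : Tendsto X (𝓝 y) (𝓝 x) := by
  have hp := hU.1
  obtain ⟨c, δ, hδ, hc⟩ := exists_coercive hU husc hAS hy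
  have hnear : ∀ᶠ w in 𝓝 y, ⟪x, w⟫ < ⟪x, y⟫ + 1 := by
    have : Continuous (fun w : Euc d => ⟪x, w⟫) := by fun_prop
    exact (this.tendsto y).eventually (gt_mem_nhds (by linarith))
  refine (isCompact_closedBall (0 : Euc d)
    ((c - (U x).toReal + ⟪x, y⟫ + 1) / δ)).tendsto_nhds_of_unique_mapClusterPt ?_ ?_
  · filter_upwards [hX, hc, hnear] with w h1 h2 h3
    have h4 := h2 _ h1.1
    have h5 := h1.2 x hx.1
    rw [inner_sub_left] at h5
    rw [mem_closedBall_zero_iff, le_div_iff₀ hδ]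
    linarith
  · intro z _ hz
    -- It suffices that `z` is a maximiser; otherwise `U z` lies strictly below the value forced
    -- by optimality of `x`, and this strict inequality persists near `(z, y)`.
    have hge : (((U x).toReal + ⟪z - x, y⟫ : ℝ) : EReal) ≤ U z := by
      by_contra! hlt
      obtain ⟨r, hr1, hr2⟩ := EReal.lt_iff_exists_real_btwn.1 hlt
      rw [EReal.coe_lt_coe_iff] at hr2
      have hcont : Continuous (fun q : Euc d × Euc d => (U x).toReal + ⟪q.1 - x, q.2⟫) := by
        fun_prop
      have hev := (hcont.tendsto (z, y)).eventually (lt_mem_nhds hr2)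
      rw [nhds_prod_eq, eventually_prod_iff] at hev
      obtain ⟨P, hP, Q, hQ, hPQ⟩ := hev
      have hfreq := hz.frequently (hP.and (husc z r hr1))
      obtain ⟨w, ⟨hw1, hw2⟩, hw3, hw4⟩ := (hfreq.and_eventually (hQ.and hX)).exists
      have h1 := hPQ hw1 hw3
      have h2 := hw4.2 x hx.1
      rw [← coe_toReal_of_mem hp hw4.1, EReal.coe_lt_coe_iff] at hw2
      simp only [inner_sub_left] at h1 h2
      linarith
    have hzD : z ∈ effDom U := fun h => by
      rw [h, le_bot_iff] at hge
      exact EReal.coe_ne_bot _ hge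
    rw [← coe_toReal_of_mem hp hzD, EReal.coe_le_coe_iff, inner_sub_left] at hge
    refine IsOpt.unique hU hsc hes ⟨hzD, fun v hv => ?_⟩ hx
    have := hx.2 v hv
    rw [inner_sub_left] at this ⊢
    linarith

theorem hasGradientAt_dualFn (hU : SupportedOnOrthant U) (husc : UpperSemicontinuous U)
    (hsc : StrictConcaveOnIntOrthant U) {g : Euc d → Euc d} (hes : EssSmoothWith U g)
    (hAS : AsympSatiable U) {y x : Euc d} (hy : y ∈ interior (posOrthant d)) (hx : IsOpt U y x) :
    HasGradientAt (fun z => (dualFn U z).toReal) (-x) y := by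
  have hp := hU.1
  obtain ⟨X, hX⟩ : ∃ X : Euc d → Euc d, ∀ w ∈ interior (posOrthant d), IsOpt U w (X w) := by
    choose! X hX using fun w (hw : w ∈ interior (posOrthant d)) => exists_isOpt hU husc hAS hw
    exact ⟨X, hX⟩
  have hX' : ∀ᶠ w in 𝓝 y, IsOpt U w (X w) := by
    filter_upwards [isOpen_interior.mem_nhds hy] with w hw using hX w hw
  have ht := tendsto_isOpt hU husc hsc hes hAS hy hx hX'
  rw [hasGradientAt_iff_isLittleO, Asymptotics.isLittleO_iff]
  intro ε hε
  have hnear : ∀ᶠ w in 𝓝 y, ‖X w - x‖ < ε :=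
    (tendsto_iff_norm_sub_tendsto_zero.1 ht).eventually (gt_mem_nhds hε)
  filter_upwards [hX', hnear] with w hw hwε
  rw [hx.dualFn_eq hp, hw.dualFn_eq hp, EReal.toReal_coe, EReal.toReal_coe]
  have h1 := hx.2 _ hw.1
  have h2 := hw.2 _ hx.1
  -- The two optimality inequalities squeeze the linearisation error between `0` and
  -- `⟨x - X w, w - y⟩`.
  have h3 : ⟪x - X w, w - y⟫ ≤ ε * ‖w - y‖ := by
    refine (real_inner_le_norm _ _).trans ?_
    have : ‖x - X w‖ ≤ ε := by
      rw [norm_sub_rev]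
      exact hwε.le
    gcongr
  rw [Real.norm_eq_abs, abs_le]
  have h4 : 0 ≤ ε * ‖w - y‖ := by positivity
  simp only [inner_sub_left, inner_sub_right, inner_neg_left] at h1 h2 h3 ⊢
  constructor <;> linarith

end

/-- For a utility function `U` supported on `ℝ^d_+` which is upper semi-continuous,
strictly concave on `int(ℝ^d_+)`, essentially smooth and asymptotically satiable, the
dual function `U*` is finite and differentiable at every `x* ∈ int(ℝ^d_+)`, the Fenchel
inequality `U*(x*) ≥ U(x) - ⟨x, x*⟩` holds for all `x`, and equality holds if and only if
`x = -∇U*(x*)`. -/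
theorem fenchel_equality_iff_gradient
    (U : Euc d → EReal) (hU : SupportedOnOrthant U)
    (husc : UpperSemicontinuous U)
    (hsc : StrictConcaveOnIntOrthant U)
    (g : Euc d → Euc d) (hes : EssSmoothWith U g)
    (hAS : AsympSatiable U) :
    ∀ y ∈ interior (posOrthant d),
      dualFn U y ≠ ⊤ ∧ dualFn U y ≠ ⊥ ∧
      ∃ G : Euc d, HasGradientAt (fun z => (dualFn U z).toReal) G y ∧
        (∀ x : Euc d, U x - ((⟪x, y⟫ : ℝ) : EReal) ≤ dualFn U y) ∧
        ∀ x : Euc d, dualFn U y = U x - ((⟪x, y⟫ : ℝ) : EReal) ↔ x = -G := by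
  intro y hy
  obtain ⟨x₀, hx₀⟩ := exists_isOpt hU husc hAS hy
  have hval := hx₀.dualFn_eq hU.1
  have hbot : dualFn U y ≠ ⊥ := hval ▸ EReal.coe_ne_bot _
  refine ⟨hval ▸ EReal.coe_ne_top _, hbot, -x₀,
    hasGradientAt_dualFn hU husc hsc hes hAS hy hx₀,
    fun x => le_iSup (fun x : Euc d => U x - ((⟪x, y⟫ : ℝ) : EReal)) x, fun x => ?_⟩
  rw [neg_neg]
  constructor
  · intro h
    exact (isOpt_of_dualFn_eq hU.1 hbot h).unique hU hsc hes hx₀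
  · rintro rfl
    rw [hval, EReal.coe_sub, coe_toReal_of_mem hU.1 hx₀.1]
end
end
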